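/- Generalized y-momentum conservation law for the potential Kawahara–KP equation: if v solves the potential Kawahara–KP equation and f : ℝ → ℝ is any smooth function, then ∂_t T + ∂_x Φˣ + ∂_y Φʸ = 0 holds at every point of ℝ³, where T := (1/2)·v_x·v_y·f(t) + (1/(4σ))·y·v_x²·f'(t) + (1/(2σ))·y·v·f''(t); Φˣ := ( (1/2)·v_t·v_y + (β·v_xxx + (1/2)·v_x² + v_xxxxx)·v_y - (β·v_xx + v_xxxx)·v_xy + v_xxx·v_xxy )·f(t) + y·( (1/4)·v_y² + (1/(2σ))·(β·v_x·v_xxx - (1/2)·β·v_xx² + (1/3)·v_x³ + v_xxxxx·v_x - v_xx·v_xxxx + (1/2)·v_xxx²) )·f'(t) - (1/(2σ))·( x·y·(β·v_xxx + (1/2)·v_x² + v_xxxxx + v_t) - y·(β·v_xx + v_xxxx) )·f''(t) - (1/(12σ²))·y³·(β·v_xxx + (1/2)·v_x² + v_xxxxx + v_t)·f'''(t); and Φʸ := -(1/2)·( (v_x·v_t + σ·v_y² - β·v_xx² + (1/3)·v_x³ + v_xxx²)·f(t) + y·v_x·v_y·f'(t) - x·(y·v_y - v)·f''(t) - (1/(2σ))·((1/3)·y³·v_y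 - y²·v)·f'''(t) ). -/

import Mathlib

/-- Partial derivative in `t` of a function `v (t, x, y)` given in curried form. -/
noncomputable def pt (v : ℝ → ℝ → ℝ → ℝ) : ℝ → ℝ → ℝ → ℝ :=
  fun t x y => deriv (fun s => v s x y) t

/-- Partial derivative in `x` of a function `v (t, x, y)` given in curried form. -/
noncomputable def px (v : ℝ → ℝ → ℝ → ℝ) : ℝ → ℝ → ℝ → ℝ :=
  fun t x y => deriv (fun s => v t s y) x

/-- Partial derivative in `y` of a function `v (t, x, y)` given in curried form. -/
noncomputable def py (v : ℝ → ℝ → ℝ → ℝ) : ℝ → ℝ → ℝ → ℝ :=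
  fun t x y => deriv (fun s => v t x s) y

/-- The potential Kawahara–KP operator:
`v_tx + v_x·v_xx + β·v_xxxx + v_xxxxxx - σ·v_yy`. -/
noncomputable def KKP (β σ : ℝ) (v : ℝ → ℝ → ℝ → ℝ) : ℝ → ℝ → ℝ → ℝ :=
  fun t x y =>
    px (pt v) t x y + px v t x y * px (px v) t x y
      + β * px (px (px (px v))) t x y
      + px (px (px (px (px (px v))))) t x y
      - σ * py (py v) t x y

/-- The linearization of the potential Kawahara–KP equation at `v`, applied to `p`:
`p_tx + v_xx·p_x + v_x·p_xx + β·p_xxxx + p_xxxxxx - σ·p_yy`. -/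
noncomputable def KKPlin (β σ : ℝ) (v p : ℝ → ℝ → ℝ → ℝ) : ℝ → ℝ → ℝ → ℝ :=
  fun t x y =>
    px (pt p) t x y + px (px v) t x y * px p t x y + px v t x y * px (px p) t x y
      + β * px (px (px (px p))) t x y
      + px (px (px (px (px (px p))))) t x y
      - σ * py (py p) t x y

/-- Smoothness of a curried function. -/
def Sm (v : ℝ → ℝ → ℝ → ℝ) : Prop :=
  ContDiff ℝ (⊤ : ℕ∞) (fun q : ℝ × ℝ × ℝ => v q.1 q.2.1 q.2.2)

/-- Directional derivative of a curried function. -/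
noncomputable def pd (w : ℝ × ℝ × ℝ) (v : ℝ → ℝ → ℝ → ℝ) : ℝ → ℝ → ℝ → ℝ :=
  fun t x y => fderiv ℝ (fun q : ℝ × ℝ × ℝ => v q.1 q.2.1 q.2.2) (t, x, y) w

theorem Sm.pd {v : ℝ → ℝ → ℝ → ℝ} (h : Sm v) (w : ℝ × ℝ × ℝ) : Sm (pd w v) := by
  have h1 : ContDiff ℝ (⊤ : ℕ∞) (fderiv ℝ (fun q : ℝ × ℝ × ℝ => v q.1 q.2.1 q.2.2)) :=
    ContDiff.fderiv_right h (by simp)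
  exact h1.clm_apply contDiff_const

theorem Sm.pd_comm {v : ℝ → ℝ → ℝ → ℝ} (h : Sm v) (w w' : ℝ × ℝ × ℝ) :
    _root_.pd w (_root_.pd w' v) = _root_.pd w' (_root_.pd w v) := by
  funext t x y
  have h1 : ContDiff ℝ (⊤ : ℕ∞) (fderiv ℝ (fun q : ℝ × ℝ × ℝ => v q.1 q.2.1 q.2.2)) :=
    ContDiff.fderiv_right h (by simp)
  have hd : DifferentiableAt ℝ (fderiv ℝ (fun q : ℝ × ℝ × ℝ => v q.1 q.2.1 q.2.2)) (t, x, y) :=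
    (h1.differentiable (by simp)) _
  have key : ∀ a b : ℝ × ℝ × ℝ, _root_.pd a (_root_.pd b v) t x y =
      fderiv ℝ (fderiv ℝ (fun q : ℝ × ℝ × ℝ => v q.1 q.2.1 q.2.2)) (t, x, y) a b := by
    intro a b
    have := (hd.hasFDerivAt.clm_apply (hasFDerivAt_const b (t, x, y))).fderiv
    change fderiv ℝ (fun q => fderiv ℝ (fun q : ℝ × ℝ × ℝ => v q.1 q.2.1 q.2.2) q b) (t, x, y) a = _
    rw [this]; simp
  rw [key, key]
  have hs : IsSymmSndFDerivAt ℝ (fun q : ℝ × ℝ × ℝ => v q.1 q.2.1 q.2.2) (t, x, y) :=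
    ContDiffAt.isSymmSndFDerivAt (n := (⊤ : ℕ∞)) (ContDiff.contDiffAt h)
      (by simp only [minSmoothness_of_isRCLikeNormedField]; exact WithTop.coe_le_coe.2 (le_top : (2 : ℕ∞) ≤ ⊤))
  exact hs w w'

theorem Sm.dt {v : ℝ → ℝ → ℝ → ℝ} (h : Sm v) (t x y : ℝ) :
    HasDerivAt (fun s => v s x y) (_root_.pd (1, 0, 0) v t x y) t := by
  have hd := ((ContDiff.differentiable h (by simp)) (t, x, y)).hasFDerivAt
  exact hd.comp_hasDerivAt (f := fun s : ℝ => (s, x, y)) t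
    ((hasDerivAt_id t).prodMk (hasDerivAt_const t (x, y)))

theorem Sm.dx {v : ℝ → ℝ → ℝ → ℝ} (h : Sm v) (t x y : ℝ) :
    HasDerivAt (fun s => v t s y) (_root_.pd (0, 1, 0) v t x y) x := by
  have hd := ((ContDiff.differentiable h (by simp)) (t, x, y)).hasFDerivAt
  exact hd.comp_hasDerivAt (f := fun s : ℝ => (t, s, y)) x
    ((hasDerivAt_const x t).prodMk ((hasDerivAt_id x).prodMk (hasDerivAt_const x y)))

theorem Sm.dy {v : ℝ → ℝ → ℝ → ℝ} (h : Sm v) (t x y : ℝ) :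
    HasDerivAt (fun s => v t x s) (_root_.pd (0, 0, 1) v t x y) y := by
  have hd := ((ContDiff.differentiable h (by simp)) (t, x, y)).hasFDerivAt
  exact hd.comp_hasDerivAt (f := fun s : ℝ => (t, x, s)) y
    ((hasDerivAt_const y t).prodMk ((hasDerivAt_const y x).prodMk (hasDerivAt_id y)))

theorem Sm.pt_eq {v : ℝ → ℝ → ℝ → ℝ} (h : Sm v) : pt v = _root_.pd (1, 0, 0) v := by
  funext t x y; exact (h.dt t x y).deriv

theorem Sm.px_eq {v : ℝ → ℝ → ℝ → ℝ} (h : Sm v) : px v = _root_.pd (0, 1, 0) v := by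
  funext t x y; exact (h.dx t x y).deriv

theorem Sm.py_eq {v : ℝ → ℝ → ℝ → ℝ} (h : Sm v) : py v = _root_.pd (0, 0, 1) v := by
  funext t x y; exact (h.dy t x y).deriv

theorem Sm.pt {v : ℝ → ℝ → ℝ → ℝ} (h : Sm v) : Sm (pt v) := by rw [h.pt_eq]; exact h.pd _

theorem Sm.px {v : ℝ → ℝ → ℝ → ℝ} (h : Sm v) : Sm (px v) := by rw [h.px_eq]; exact h.pd _

theorem Sm.py {v : ℝ → ℝ → ℝ → ℝ} (h : Sm v) : Sm (py v) := by rw [h.py_eq]; exact h.pd _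

theorem Sm.xy {v : ℝ → ℝ → ℝ → ℝ} (h : Sm v) : _root_.px (_root_.py v) = _root_.py (_root_.px v) := by
  rw [h.py.px_eq, h.px.py_eq, h.px_eq, h.py_eq, h.pd_comm]

theorem Sm.tx {v : ℝ → ℝ → ℝ → ℝ} (h : Sm v) : _root_.pt (_root_.px v) = _root_.px (_root_.pt v) := by
  rw [h.pt.px_eq, h.px.pt_eq, h.px_eq, h.pt_eq, h.pd_comm]

theorem Sm.ty {v : ℝ → ℝ → ℝ → ℝ} (h : Sm v) : _root_.pt (_root_.py v) = _root_.py (_root_.pt v) := by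
  rw [h.pt.py_eq, h.py.pt_eq, h.py_eq, h.pt_eq, h.pd_comm]

theorem Sm.ht {v : ℝ → ℝ → ℝ → ℝ} (h : Sm v) (t x y : ℝ) :
    HasDerivAt (fun s => v s x y) (_root_.pt v t x y) t := by rw [h.pt_eq]; exact h.dt t x y

theorem Sm.hx {v : ℝ → ℝ → ℝ → ℝ} (h : Sm v) (t x y : ℝ) :
    HasDerivAt (fun s => v t s y) (_root_.px v t x y) x := by rw [h.px_eq]; exact h.dx t x y

theorem Sm.hy {v : ℝ → ℝ → ℝ → ℝ} (h : Sm v) (t x y : ℝ) :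
    HasDerivAt (fun s => v t x s) (_root_.py v t x y) y := by rw [h.py_eq]; exact h.dy t x y

/-- Generalized y-momentum conservation law for the potential Kawahara–KP equation. -/
theorem gen_y_momentum_conservation_KKP (β σ : ℝ) (hβ : β ≠ 0) (hσ : σ = 1 ∨ σ = -1)
    (v : ℝ → ℝ → ℝ → ℝ)
    (hv : ContDiff ℝ (⊤ : ℕ∞) (fun q : ℝ × ℝ × ℝ => v q.1 q.2.1 q.2.2))
    (hsol : ∀ t x y : ℝ, KKP β σ v t x y = 0)
    (f : ℝ → ℝ) (hf : ContDiff ℝ (⊤ : ℕ∞) f)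
    (T Φx Φy : ℝ → ℝ → ℝ → ℝ)
    (hT : T = fun t x y =>
      (1 / 2) * px v t x y * py v t x y * f t
        + (1 / (4 * σ)) * y * (px v t x y) ^ 2 * deriv f t
        + (1 / (2 * σ)) * y * v t x y * deriv (deriv f) t)
    (hΦx : Φx = fun t x y =>
      ((1 / 2) * pt v t x y * py v t x y
          + (β * px (px (px v)) t x y + (1 / 2) * (px v t x y) ^ 2
              + px (px (px (px (px v)))) t x y) * py v t x y
          - (β * px (px v) t x y + px (px (px (px v))) t x y) * py (px v) t x y
          + px (px (px v)) t x y * py (px (px v)) t x y) * f t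
        + y * ((1 / 4) * (py v t x y) ^ 2
            + (1 / (2 * σ)) * (β * px v t x y * px (px (px v)) t x y
                - (1 / 2) * β * (px (px v) t x y) ^ 2 + (1 / 3) * (px v t x y) ^ 3
                + px (px (px (px (px v)))) t x y * px v t x y
                - px (px v) t x y * px (px (px (px v))) t x y
                + (1 / 2) * (px (px (px v)) t x y) ^ 2)) * deriv f t
        - (1 / (2 * σ)) * (x * y * (β * px (px (px v)) t x y
              + (1 / 2) * (px v t x y) ^ 2 + px (px (px (px (px v)))) t x y
              + pt v t x y)
            - y * (β * px (px v) t x y + px (px (px (px v))) t x y))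
            * deriv (deriv f) t
        - (1 / (12 * σ ^ 2)) * y ^ 3 * (β * px (px (px v)) t x y
            + (1 / 2) * (px v t x y) ^ 2 + px (px (px (px (px v)))) t x y
            + pt v t x y) * deriv (deriv (deriv f)) t)
    (hΦy : Φy = fun t x y =>
      - (1 / 2) * ((px v t x y * pt v t x y + σ * (py v t x y) ^ 2
            - β * (px (px v) t x y) ^ 2 + (1 / 3) * (px v t x y) ^ 3
            + (px (px (px v)) t x y) ^ 2) * f t
          + y * px v t x y * py v t x y * deriv f t
          - x * (y * py v t x y - v t x y) * deriv (deriv f) t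
          - (1 / (2 * σ)) * ((1 / 3) * y ^ 3 * py v t x y - y ^ 2 * v t x y)
              * deriv (deriv (deriv f)) t)) :
    ∀ t x y : ℝ, pt T t x y + px Φx t x y + py Φy t x y = 0 := by
  intro t x y
  have hs : Sm v := hv
  have hf1 : ContDiff ℝ (⊤ : ℕ∞) (deriv f) := by
    have := hf.iterate_deriv 1
    simpa using this
  have hf2 : ContDiff ℝ (⊤ : ℕ∞) (deriv (deriv f)) := by
    have := hf.iterate_deriv 2
    simpa using this
  have F0 := ((hf.differentiable (by simp)) t).hasDerivAt
  have F1 := ((hf1.differentiable (by simp)) t).hasDerivAt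
  have F2 := ((hf2.differentiable (by simp)) t).hasDerivAt
  have e := hsol t x y
  unfold KKP at e
  have s1 := hs.px
  have s2 := s1.px
  have s3 := s2.px
  have s4 := s3.px
  have s5 := s4.px
  have eT : pt T t x y = _ := HasDerivAt.deriv (f := fun s => T s x y) <| by
    rw [hT]
    have a0 := hs.ht t x y
    have a1 := s1.ht t x y
    have a2 := hs.py.ht t x y
    exact ((((a1.const_mul (1/2)).fun_mul a2).fun_mul F0).fun_add
      (((a1.fun_pow 2).const_mul (1 / (4 * σ) * y)).fun_mul F1)).fun_add
      ((a0.const_mul (1 / (2 * σ) * y)).fun_mul F2)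
  have eX : px Φx t x y = _ := HasDerivAt.deriv (f := fun s => Φx t s y) <| by
    rw [hΦx]
    have i := hasDerivAt_id' x
    have at0 := hs.pt.hx t x y
    have ay := hs.py.hx t x y
    have ay1 := s1.py.hx t x y
    have ay2 := s2.py.hx t x y
    have a1 := s1.hx t x y
    have a2 := s2.hx t x y
    have a3 := s3.hx t x y
    have a4 := s4.hx t x y
    have a5 := s5.hx t x y
    have B := ((a3.const_mul β).fun_add ((a1.fun_pow 2).const_mul (1/2))).fun_add a5
    have C := (a2.const_mul β).fun_add a4
    have B' := B.fun_add at0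
    have A0 := (((((at0.const_mul (1/2)).fun_mul ay).fun_add (B.fun_mul ay)).fun_sub
      (C.fun_mul ay1)).fun_add (a3.fun_mul ay2)).mul_const (f t)
    have A1 := ((((ay.fun_pow 2).const_mul (1/4)).fun_add
      (((((((a1.const_mul β).fun_mul a3).fun_sub ((a2.fun_pow 2).const_mul (1/2*β))).fun_add
        ((a1.fun_pow 3).const_mul (1/3))).fun_add (a5.fun_mul a1)).fun_sub (a2.fun_mul a4)).fun_add
        ((a3.fun_pow 2).const_mul (1/2)) |>.const_mul (1/(2*σ)))).const_mul y).mul_const (deriv f t)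
    have A2 := ((((i.mul_const y).fun_mul B').fun_sub (C.const_mul y)).const_mul
      (1/(2*σ))).mul_const (deriv (deriv f) t)
    have A3 := (B'.const_mul (1/(12*σ^2)*y^3)).mul_const (deriv (deriv (deriv f)) t)
    exact ((A0.fun_add A1).fun_sub A2).fun_sub A3
  have eY : py Φy t x y = _ := HasDerivAt.deriv (f := fun s => Φy t x s) <| by
    rw [hΦy]
    have i := hasDerivAt_id' y
    have at0 := hs.pt.hy t x y
    have a0 := hs.hy t x y
    have ay := hs.py.hy t x y
    have a1 := s1.hy t x y
    have a2 := s2.hy t x y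
    have a3 := s3.hy t x y
    have A0 := (((((a1.fun_mul at0).fun_add ((ay.fun_pow 2).const_mul σ)).fun_sub
      ((a2.fun_pow 2).const_mul β)).fun_add ((a1.fun_pow 3).const_mul (1/3))).fun_add
      (a3.fun_pow 2)).mul_const (f t)
    have A1 := ((i.fun_mul a1).fun_mul ay).mul_const (deriv f t)
    have A2 := (((i.fun_mul ay).fun_sub a0).const_mul x).mul_const (deriv (deriv f) t)
    have A3 := (((((i.fun_pow 3).const_mul (1/3)).fun_mul ay).fun_sub
      ((i.fun_pow 2).fun_mul a0)).const_mul (1/(2*σ))).mul_const (deriv (deriv (deriv f)) t)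
    exact (((A0.fun_add A1).fun_sub A2).fun_sub A3).const_mul (-(1/2))
  rw [eT, eX, eY]
  simp only [hs.tx, hs.ty, hs.xy, s1.xy, s2.xy]
  have e' : px (px (px (px (px (px v))))) t x y = σ * py (py v) t x y - (px (pt v) t x y
    + px v t x y * px (px v) t x y + β * px (px (px (px v))) t x y) := by linarith
  rw [e']
  rcases hσ with rfl | rfl
  · push_cast; ring
  · push_cast; ring
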